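/- Let n ≥ 1. Then the following identity of polynomials in ℚ[t] holds: n · Σ_{π ∈ 𝔠_n} t^{pk(π)+1} = Σ_{d ∣ n, d odd} μ(d) (1−t)^{(n−n/d)/2} P_{n/d}^{pk}(t), where P_m^{pk}(t) = Σ_{π ∈ S_m} t^{pk(π)+1}. (For d an odd divisor of n, the exponent (n−n/d)/2 = (n/d)(d−1)/2 is a nonnegative integer.) -/

import Mathlib

open scoped Classical

noncomputable section

def oneLine (n : ℕ) (π : Equiv.Perm (Fin n)) (i : ℕ) : ℕ :=
  if h : 1 ≤ i ∧ i ≤ n then (π ⟨i - 1, by omega⟩).val + 1 else 0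

def des (n : ℕ) (π : Equiv.Perm (Fin n)) : ℕ :=
  ((Finset.Icc 1 (n - 1)).filter fun i => oneLine n π (i + 1) < oneLine n π i).card

def pk (n : ℕ) (π : Equiv.Perm (Fin n)) : ℕ :=
  ((Finset.Icc 2 (n - 1)).filter fun i =>
    oneLine n π (i - 1) < oneLine n π i ∧ oneLine n π (i + 1) < oneLine n π i).card

def lpk (n : ℕ) (π : Equiv.Perm (Fin n)) : ℕ :=
  ((Finset.Icc 1 (n - 1)).filter fun i =>
    oneLine n π (i - 1) < oneLine n π i ∧ oneLine n π (i + 1) < oneLine n π i).card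

def pval (n : ℕ) (π : Equiv.Perm (Fin n)) : ℕ :=
  ((Finset.Icc 2 (n - 1)).filter fun i =>
    oneLine n π i < oneLine n π (i - 1) ∧ oneLine n π i < oneLine n π (i + 1)).card

def udr (n : ℕ) (π : Equiv.Perm (Fin n)) : ℕ := lpk n π + pval n π + 1

def fullCycleType (n : ℕ) (π : Equiv.Perm (Fin n)) : Multiset ℕ :=
  π.cycleType + Multiset.replicate (n - π.support.card) 1

def numCycles (n : ℕ) (π : Equiv.Perm (Fin n)) : ℕ := Multiset.card (fullCycleType n π)

def numOddCycles (n : ℕ) (π : Equiv.Perm (Fin n)) : ℕ :=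
  Multiset.card ((fullCycleType n π).filter fun p => p % 2 = 1)

def IsCyclicPerm (n : ℕ) (π : Equiv.Perm (Fin n)) : Prop :=
  fullCycleType n π = {n}

def cyclicSet (n : ℕ) : Finset (Equiv.Perm (Fin n)) :=
  Finset.univ.filter fun π => IsCyclicPerm n π

def invSet (n : ℕ) : Finset (Equiv.Perm (Fin n)) :=
  Finset.univ.filter fun π => π ^ 2 = 1

def eulerianA (m : ℕ) : Polynomial ℚ :=
  ∑ π : Equiv.Perm (Fin m), Polynomial.X ^ (des m π + 1)

def peakP (m : ℕ) : Polynomial ℚ :=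
  ∑ π : Equiv.Perm (Fin m), Polynomial.X ^ (pk m π + 1)

def leftPeakP (m : ℕ) : Polynomial ℚ :=
  ∑ π : Equiv.Perm (Fin m), Polynomial.X ^ (lpk m π)

def cnk (n k : ℕ) : ℕ :=
  (Finset.univ.filter fun π : Equiv.Perm (Fin n) =>
    (∀ p ∈ fullCycleType n π, ¬ (4 ∣ p)) ∧ numCycles n (π ^ 2) = k).card

def bnk (n k : ℕ) : ℕ :=
  (Finset.univ.filter fun π : Equiv.Perm (Fin n) => numCycles n (π ^ 2) = k).card

def dnk (n k : ℕ) : ℕ :=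
  (Finset.univ.filter fun π : Equiv.Perm (Fin n) => numOddCycles n (π ^ 2) = k).card


/-- sign of a letter -/
def eps (u : ℕ) : ℤ := if Odd u then 1 else -1

def skey (u : ℕ) (x : ℕ) : ℕ ×ₗ ℤ := toLex (u, eps u * (x : ℤ))

theorem skey_lt {u v x y : ℕ} : skey u x < skey v y ↔ u < v ∨ u = v ∧ eps u * (x : ℤ) < eps v * (y : ℤ) := by
  simp [skey, Prod.Lex.lt_iff]

theorem skey_lt_even {k x y : ℕ} : skey (2 * k) x < skey (2 * k) y ↔ y < x := by
  have : ¬ Odd (2 * k) := by simp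
  simp [skey_lt, eps, this]

theorem skey_lt_odd {k x y : ℕ} : skey (2 * k + 1) x < skey (2 * k + 1) y ↔ x < y := by
  have : Odd (2 * k + 1) := by simp
  simp [skey_lt, eps, this]

def GG (p : ℕ → ℕ) : ℕ → ℕ → ℚ
  | 0, _ => 1
  | i + 1, r => ∑ l ∈ Finset.range r, GG p i l +
      if skey r (p (i + 1)) < skey r (p (i + 2)) then GG p i r else 0

def pkq (p : ℕ → ℕ) (i : ℕ) : ℕ :=
  ((Finset.Icc 2 i).filter fun j => p (j - 1) < p j ∧ p (j + 1) < p j).card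

def QQ : PowerSeries ℚ := (1 + PowerSeries.X) * (1 - PowerSeries.X)⁻¹
def UU : PowerSeries ℚ := 4 * PowerSeries.X * ((1 + PowerSeries.X)⁻¹) ^ 2

theorem inv_m : (1 - PowerSeries.X : PowerSeries ℚ) * (1 - PowerSeries.X)⁻¹ = 1 :=
  PowerSeries.mul_inv_cancel _ (by simp)
theorem inv_p : (1 + PowerSeries.X : PowerSeries ℚ) * (1 + PowerSeries.X)⁻¹ = 1 :=
  PowerSeries.mul_inv_cancel _ (by simp)

theorem QQ_sq : QQ ^ 2 * (1 - UU) = 1 := by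
  have h1 := inv_m
  have h2 := inv_p
  unfold QQ UU
  set x : PowerSeries ℚ := PowerSeries.X
  set a := (1 - x)⁻¹
  set b := (1 + x)⁻¹
  have : ((1 + x) * a) ^ 2 * (1 - 4 * x * b ^ 2) = a ^ 2 * ((1+x)^2 - 4 * x * ((1 + x) * b) ^ 2) := by ring
  rw [this, h2]
  have : a ^ 2 * ((1+x)^2 - 4 * x * 1 ^ 2) = ((1 - x) * a) ^ 2 := by ring
  rw [this, h1, one_pow]

theorem UQ1 : UU * QQ = 4 * PowerSeries.X * (1 - PowerSeries.X)⁻¹ * (1 + PowerSeries.X)⁻¹ := by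
  have h2 := inv_p
  unfold UU QQ
  linear_combination (4 * PowerSeries.X * (1 - PowerSeries.X)⁻¹ * (1 + PowerSeries.X)⁻¹) * h2

theorem UQ2 : UU * QQ ^ 2 = 4 * PowerSeries.X * ((1 - PowerSeries.X)⁻¹) ^ 2 := by
  have h2 := inv_p
  rw [pow_two, ← mul_assoc, UQ1]
  unfold QQ
  linear_combination (4 * PowerSeries.X * ((1 - PowerSeries.X)⁻¹) ^ 2) * h2

def ga (p : ℕ → ℕ) (i : ℕ) : PowerSeries ℚ := PowerSeries.mk fun k => GG p i (2 * k + 1)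
def gb (p : ℕ → ℕ) (i : ℕ) : PowerSeries ℚ := PowerSeries.mk fun k => GG p i (2 * k)

theorem sum_range_two (g : ℕ → ℚ) (k : ℕ) :
    ∑ l ∈ Finset.range (2 * k), g l = ∑ j ∈ Finset.range k, (g (2 * j + 1) + g (2 * j)) := by
  induction k with
  | zero => simp
  | succ k ih =>
    rw [show 2 * (k + 1) = 2 * k + 1 + 1 by ring, Finset.sum_range_succ, Finset.sum_range_succ, ih,
      Finset.sum_range_succ]
    ring

theorem mk_range_mul (g : ℕ → ℚ) :
    (1 - PowerSeries.X) * (PowerSeries.mk fun k => ∑ j ∈ Finset.range k, g j) = PowerSeries.X * PowerSeries.mk g := by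
  ext k
  rw [sub_mul, one_mul, map_sub]
  cases k with
  | zero => simp
  | succ k =>
    rw [PowerSeries.coeff_succ_X_mul, PowerSeries.coeff_succ_X_mul]
    simp [Finset.sum_range_succ]

theorem ga_zero (p : ℕ → ℕ) : ga p 0 = (1 - PowerSeries.X)⁻¹ := by
  have h1 : (1 - PowerSeries.X) * ga p 0 = 1 := by
    ext k
    rw [sub_mul, one_mul, map_sub]
    cases k with
    | zero => simp [ga, GG]
    | succ k =>
      rw [PowerSeries.coeff_succ_X_mul]
      simp [ga, GG]
  calc ga p 0 = ((1 - PowerSeries.X) * (1 - PowerSeries.X)⁻¹) * ga p 0 := by rw [inv_m, one_mul]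
    _ = (1 - PowerSeries.X)⁻¹ * ((1 - PowerSeries.X) * ga p 0) := by ring
    _ = _ := by rw [h1, mul_one]

theorem gb_zero (p : ℕ → ℕ) : gb p 0 = ga p 0 := by
  ext k
  simp [ga, gb, GG]

theorem ga_add_gb (p : ℕ → ℕ) (i : ℕ) :
    ga p i + gb p i = PowerSeries.mk fun j => (GG p i (2 * j + 1) + GG p i (2 * j)) := by
  ext k; simp [ga, gb]

def gS (p : ℕ → ℕ) (i : ℕ) : PowerSeries ℚ := PowerSeries.mk fun k => ∑ l ∈ Finset.range (2 * k), GG p i l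

theorem gS_mul (p : ℕ → ℕ) (i : ℕ) : (1 - PowerSeries.X) * gS p i = PowerSeries.X * (ga p i + gb p i) := by
  rw [ga_add_gb, ← mk_range_mul]
  simp only [gS, sum_range_two]

theorem ga_asc (p : ℕ → ℕ) (i : ℕ) (h : p (i + 1) < p (i + 2)) :
    (1 - PowerSeries.X) * ga p (i + 1) = ga p i + gb p i := by
  have : ga p (i + 1) = gS p i + (ga p i + gb p i) := by
    ext k
    simp only [ga, gb, gS, GG, PowerSeries.coeff_mk, map_add, skey_lt_odd, h, if_true, Finset.sum_range_succ]
    ring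
  rw [this, mul_add, gS_mul]; ring

theorem gb_asc (p : ℕ → ℕ) (i : ℕ) (h : p (i + 1) < p (i + 2)) :
    (1 - PowerSeries.X) * gb p (i + 1) = PowerSeries.X * (ga p i + gb p i) := by
  have : gb p (i + 1) = gS p i := by
    ext k
    simp only [gb, gS, GG, PowerSeries.coeff_mk, skey_lt_even, h.not_gt, if_false, add_zero]
  rw [this, gS_mul]

theorem ga_desc (p : ℕ → ℕ) (i : ℕ) (h : p (i + 2) < p (i + 1)) :
    (1 - PowerSeries.X) * ga p (i + 1) = PowerSeries.X * ga p i + gb p i := by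
  have : ga p (i + 1) = gS p i + gb p i := by
    ext k
    simp only [ga, gb, gS, GG, PowerSeries.coeff_mk, map_add, skey_lt_odd, h.not_gt, if_false,
      Finset.sum_range_succ]
    ring
  rw [this, mul_add, gS_mul]; ring

theorem gb_desc (p : ℕ → ℕ) (i : ℕ) (h : p (i + 2) < p (i + 1)) :
    gb p (i + 1) = ga p (i + 1) := by
  ext k
  simp only [ga, gb, GG, PowerSeries.coeff_mk, skey_lt_odd, skey_lt_even, h, h.not_gt, if_false, if_true,
      Finset.sum_range_succ]
  ring

theorem pkq_succ (p : ℕ → ℕ) (i : ℕ) :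
    pkq p (i + 1) = pkq p i + if 1 ≤ i ∧ p i < p (i + 1) ∧ p (i + 2) < p (i + 1) then 1 else 0 := by
  unfold pkq
  by_cases hi : 1 ≤ i
  · have : Finset.Icc 2 (i + 1) = insert (i + 1) (Finset.Icc 2 i) := by
      ext x; simp; omega
    rw [this, Finset.filter_insert]
    simp only [Nat.add_sub_cancel, hi, true_and]
    split_ifs with h
    · rw [Finset.card_insert_of_notMem (by simp)]
    · rfl
  · have : i = 0 := by omega
    subst this
    simp

theorem cancel_m {a b : PowerSeries ℚ} (h : (1 - PowerSeries.X) * a = b) : a = (1 - PowerSeries.X)⁻¹ * b := by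
  rw [← h, ← mul_assoc, mul_comm _ (1 - PowerSeries.X : PowerSeries ℚ), inv_m, one_mul]

theorem g_main (p : ℕ → ℕ) (i : ℕ) (hp : ∀ j, 1 ≤ j → j ≤ i → p j ≠ p (j + 1)) :
    ga p i + gb p i = 2 * UU ^ (pkq p i) * QQ ^ i * (1 - PowerSeries.X)⁻¹ ∧
    ((i = 0 ∨ p (i + 1) < p i) → gb p i = ga p i) ∧
    ((1 ≤ i ∧ p i < p (i + 1)) → gb p i = PowerSeries.X * ga p i) := by
  induction i with
  | zero =>
    refine ⟨?_, fun _ => gb_zero p, fun h => by omega⟩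
    rw [gb_zero, ga_zero]
    simp [pkq]; ring
  | succ i ih =>
    obtain ⟨h1, h2, h3⟩ := ih (fun j hj hj' => hp j hj (by omega))
    have hne := hp (i + 1) (by omega) le_rfl
    have e1 := inv_m
    have e2 := inv_p
    rw [show i + 1 + 1 = i + 2 from rfl] at *
    rcases lt_or_gt_of_ne hne with h | h
    · have A := cancel_m (ga_asc p i h)
      have B := cancel_m (gb_asc p i h)
      refine ⟨?_, fun h' => by omega, fun _ => ?_⟩
      · rw [pkq_succ, if_neg (by omega), A, B, h1]
        simp only [QQ]
        ring
      · rw [A, B]; ring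
    · have A := cancel_m (ga_desc p i h)
      have B := gb_desc p i h
      refine ⟨?_, fun h' => B, fun h' => by omega⟩
      rw [B, pkq_succ]
      by_cases hpk : 1 ≤ i ∧ p i < p (i + 1)
      · rw [if_pos ⟨hpk.1, hpk.2, h⟩]
        have h4 := h3 hpk
        rw [h4] at h1
        rw [A, h4]
        have : ga p i = (1 + PowerSeries.X)⁻¹ * (ga p i + PowerSeries.X * ga p i) := by
          have : ga p i + PowerSeries.X * ga p i = (1 + PowerSeries.X) * ga p i := by ring
          rw [this, ← mul_assoc, mul_comm _ (1 + PowerSeries.X : PowerSeries ℚ), e2, one_mul]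
        rw [this, h1, pow_succ, pow_succ]
        linear_combination (-(2 * UU ^ (pkq p i) * QQ ^ i * (1 - PowerSeries.X)⁻¹)) * UQ1
      · rw [if_neg (by tauto)]
        have h4 : gb p i = ga p i := by
          apply h2
          by_cases h0 : i = 0
          · left; exact h0
          · right
            have := hp i (by omega) (by omega)
            omega
        rw [h4] at h1
        rw [A, h4]
        have : (1 - PowerSeries.X)⁻¹ * (PowerSeries.X * ga p i + ga p i) + (1 - PowerSeries.X)⁻¹ * (PowerSeries.X * ga p i + ga p i) = QQ * (ga p i + ga p i) := by
          unfold QQ; ring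
        rw [this, h1]
        ring

theorem gS_main (p : ℕ → ℕ) (i : ℕ) (hp : ∀ j, 1 ≤ j → j ≤ i → p j ≠ p (j + 1)) :
    2 * gS p i = QQ ^ (i + 2) * UU ^ (pkq p i + 1) := by
  have h := (g_main p i hp).1
  have h1 := cancel_m (gS_mul p i)
  have e2 := inv_p
  rw [h1, h, pow_succ, pow_add]
  linear_combination (-(QQ ^ i * UU ^ (pkq p i))) * UQ2

def Valid (p : ℕ → ℕ) (K i : ℕ) (f : Fin (i + 1) → Fin K) : Prop :=
  ∀ j : Fin i, skey (f j.castSucc) (p (j + 1)) < skey (f j.succ) (p (j + 2))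

theorem valid_snoc (p : ℕ → ℕ) (K i : ℕ) (g : Fin (i + 1) → Fin K) (r : Fin K) :
    Valid p K (i + 1) (Fin.snoc (α := fun _ => Fin K) g r) ↔
      Valid p K i g ∧ skey (g (Fin.last i)) (p (i + 1)) < skey r (p (i + 2)) := by
  unfold Valid
  constructor
  · intro h
    refine ⟨fun j => ?_, ?_⟩
    · have := h j.castSucc
      rw [← Fin.castSucc_succ, Fin.snoc_castSucc, Fin.snoc_castSucc] at this
      exact this
    · have := h (Fin.last i)
      rw [Fin.succ_last, Fin.snoc_castSucc, Fin.snoc_last] at this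
      exact this
  · rintro ⟨h1, h2⟩ j
    refine Fin.lastCases ?_ (fun j => ?_) j
    · rw [Fin.succ_last, Fin.snoc_castSucc, Fin.snoc_last]
      exact h2
    · rw [← Fin.castSucc_succ, Fin.snoc_castSucc, Fin.snoc_castSucc]
      exact h1 j

theorem count_valid (p : ℕ → ℕ) (K i : ℕ) (r : Fin K) :
    (((Finset.univ : Finset (Fin (i + 1) → Fin K)).filter
      fun f => Valid p K i f ∧ f (Fin.last i) = r).card : ℚ) = GG p i r := by
  induction i generalizing r with
  | zero =>
    have : ((Finset.univ : Finset (Fin (0 + 1) → Fin K)).filter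
      fun f => Valid p K 0 f ∧ f (Fin.last 0) = r) = {fun _ => r} := by
      ext f
      simp only [Finset.mem_filter, Finset.mem_univ, true_and, Finset.mem_singleton]
      constructor
      · rintro ⟨_, h⟩
        funext j
        rw [← h]; congr 1; exact Fin.ext (by have := j.2; simp only [Fin.val_last]; omega)
      · rintro rfl
        exact ⟨fun j => j.elim0, rfl⟩
    rw [this]; simp [GG]
  | succ i ih =>
    have h1 : ((Finset.univ : Finset (Fin (i + 1 + 1) → Fin K)).filter
      fun f => Valid p K (i + 1) f ∧ f (Fin.last (i + 1)) = r).card =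
      ((Finset.univ : Finset (Fin (i + 1) → Fin K)).filter
      fun g => Valid p K i g ∧ skey (g (Fin.last i)) (p (i + 1)) < skey r (p (i + 2))).card := by
      symm
      apply Finset.card_bij (fun g _ => (Fin.snoc (α := fun _ => Fin K) g r : Fin (i + 1 + 1) → Fin K))
      · intro g hg
        simp only [Finset.mem_filter, Finset.mem_univ, true_and] at hg ⊢
        exact ⟨(valid_snoc p K i g r).2 hg, by simp⟩
      · intro g _ g' _ h
        exact (Fin.snoc_inj.1 h).1
      · intro f hf
        simp only [Finset.mem_filter, Finset.mem_univ, true_and] at hf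
        have e : (Fin.snoc (α := fun _ => Fin K) (Fin.init f) r : Fin (i + 1 + 1) → Fin K) = f := by
          rw [← hf.2]; exact Fin.snoc_init_self f
        refine ⟨Fin.init f, ?_, e⟩
        simp only [Finset.mem_filter, Finset.mem_univ, true_and]
        rw [← valid_snoc, e]; exact hf.1
    rw [h1]
    rw [Finset.card_eq_sum_card_fiberwise (f := fun g => g (Fin.last i)) (t := Finset.univ) (by simp)]
    push_cast
    have h2 : ∀ l : Fin K, ((((Finset.univ : Finset (Fin (i + 1) → Fin K)).filter
      fun g => Valid p K i g ∧ skey (g (Fin.last i)) (p (i + 1)) < skey r (p (i + 2))).filter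
        fun g => g (Fin.last i) = l).card : ℚ) =
        if skey l (p (i + 1)) < skey r (p (i + 2)) then GG p i l else 0 := by
      intro l
      rw [← ih l, Finset.filter_filter]
      split_ifs with h
      · congr 2
        ext g
        simp only [Finset.mem_filter, Finset.mem_univ, true_and]
        constructor
        · rintro ⟨⟨h1, h2⟩, h3⟩; exact ⟨h1, h3⟩
        · rintro ⟨h1, h3⟩; refine ⟨⟨h1, ?_⟩, h3⟩; rw [h3]; exact h
      · rw [Finset.filter_false_of_mem]; · simp
        rintro g _ ⟨⟨_, h2⟩, h3⟩
        rw [h3] at h2; exact h h2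
    rw [Finset.sum_congr rfl (fun l _ => h2 l)]
    rw [Fin.sum_univ_eq_sum_range (fun l => if skey l (p (i + 1)) < skey r (p (i + 2)) then GG p i l else 0) K]
    rw [← Finset.sum_subset (s₁ := Finset.range (r + 1))]
    · rw [Finset.sum_range_succ, GG]
      congr 1
      apply Finset.sum_congr rfl
      intro l hl
      rw [if_pos]
      rw [skey_lt]; left; simpa using hl
    · intro x; simp; omega
    · intro x _ hx
      rw [if_neg]
      rw [skey_lt]
      simp at hx
      omega

theorem count_valid_total (p : ℕ → ℕ) (K i : ℕ) :
    (((Finset.univ : Finset (Fin (i + 1) → Fin K)).filter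
      fun f => Valid p K i f).card : ℚ) = ∑ l ∈ Finset.range K, GG p i l := by
  rw [Finset.card_eq_sum_card_fiberwise (f := fun g => g (Fin.last i)) (t := Finset.univ) (by simp)]
  push_cast
  rw [← Fin.sum_univ_eq_sum_range]
  apply Finset.sum_congr rfl
  intro l _
  rw [← count_valid, Finset.filter_filter]

def Compat (n K : ℕ) (π : Equiv.Perm (Fin n)) (f : Fin n → Fin K) : Prop :=
  StrictMono fun i => skey (f i) (π i)

def Om (n K : ℕ) (π : Equiv.Perm (Fin n)) : ℕ :=
  ((Finset.univ : Finset (Fin n → Fin K)).filter fun f => Compat n K π f).card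

theorem skey_shift (u v x y : ℕ) : skey u (x + 1) < skey v (y + 1) ↔ skey u x < skey v y := by
  rw [skey_lt, skey_lt]
  constructor
  · rintro (h | ⟨rfl, h⟩)
    · exact Or.inl h
    · right; refine ⟨rfl, ?_⟩; push_cast at h; linarith
  · rintro (h | ⟨rfl, h⟩)
    · exact Or.inl h
    · right; refine ⟨rfl, ?_⟩; push_cast; linarith

theorem Om_gf (i : ℕ) (π : Equiv.Perm (Fin (i + 1))) :
    2 * PowerSeries.mk (fun k => (Om (i + 1) (2 * k) π : ℚ)) = QQ ^ (i + 1 + 1) * UU ^ (pk (i + 1) π + 1) := by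
  have hone : ∀ j : Fin (i + 1), oneLine (i + 1) π (j + 1) = π j + 1 := by
    intro j
    unfold oneLine
    rw [dif_pos (by omega)]
    simp
  have h1 : ∀ j, 1 ≤ j → j ≤ i → oneLine (i + 1) π j ≠ oneLine (i + 1) π (j + 1) := by
    intro j hj hj' h
    have e1 := hone ⟨j - 1, by omega⟩
    have e2 := hone ⟨j, by omega⟩
    simp only [Nat.sub_add_cancel hj] at e1
    simp only at e2
    rw [e1, e2] at h
    have : π ⟨j - 1, by omega⟩ = π ⟨j, by omega⟩ := Fin.ext (by omega)
    have := π.injective this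
    simp at this; omega
  have h2 : pk (i + 1) π = pkq (oneLine (i + 1) π) i := by
    unfold pk pkq
    simp only [Nat.add_sub_cancel]
  rw [h2, ← gS_main _ _ h1]
  congr 1
  ext k
  rw [PowerSeries.coeff_mk, gS, PowerSeries.coeff_mk, ← count_valid_total]
  unfold Om
  congr 2
  ext f
  simp only [Finset.mem_filter, Finset.mem_univ, true_and]
  unfold Compat Valid
  rw [Fin.strictMono_iff_lt_succ]
  apply forall_congr'
  intro j
  have e1 := hone j.castSucc
  have e2 := hone j.succ
  simp only [Fin.val_castSucc, Fin.val_succ] at e1 e2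
  rw [e1, e2, skey_shift]

theorem sort_card {n : ℕ} {α : Type*} [LinearOrder α] (g : Fin n → α) (hg : Function.Injective g) :
    ((Finset.univ : Finset (Equiv.Perm (Fin n))).filter fun π : Equiv.Perm (Fin n) => StrictMono (g ∘ π)).card = 1 := by
  rw [Finset.card_eq_one]
  refine ⟨Tuple.sort g, ?_⟩
  have hs : StrictMono (g ∘ Tuple.sort g) :=
    (Tuple.monotone_sort g).strictMono_of_injective (hg.comp (Tuple.sort g).injective)
  ext π
  simp only [Finset.mem_filter, Finset.mem_univ, true_and, Finset.mem_singleton]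
  constructor
  · intro h
    have : g ∘ π = g ∘ Tuple.sort g := by
      apply (StrictMono.range_inj h hs).1
      rw [Set.range_comp, Set.range_comp, π.range_eq_univ, (Tuple.sort g).range_eq_univ]
    ext j
    have := hg (congrFun this j)
    rw [this]
  · rintro rfl
    exact hs

theorem eps_ne (u : ℕ) : eps u ≠ 0 := by unfold eps; split_ifs <;> simp

theorem skey_inj {u v x y : ℕ} (h : skey u x = skey v y) : u = v ∧ x = y := by
  unfold skey at h
  have := toLex.injective h
  simp only [Prod.mk.injEq] at this
  obtain ⟨rfl, h⟩ := this
  refine ⟨rfl, ?_⟩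
  have := mul_left_cancel₀ (eps_ne _) h
  exact_mod_cast this

theorem Om_eq_conj (n K : ℕ) (π φ : Equiv.Perm (Fin n)) :
    Om n K π = ((Finset.univ : Finset (Fin n → Fin K)).filter fun w => Compat n K π (w ∘ φ)).card := by
  unfold Om
  symm
  apply Finset.card_bij (fun w _ => w ∘ φ)
  · intro w hw
    simpa using hw
  · intro w _ w' _ h
    funext j
    have := congrFun h (φ.symm j)
    simpa using this
  · intro f hf
    refine ⟨f ∘ φ.symm, ?_, ?_⟩
    · have : (f ∘ φ.symm) ∘ φ = f := by funext j; simp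
      simp only [Finset.mem_filter, Finset.mem_univ, true_and] at hf ⊢
      rwa [this]
    · funext j; simp

theorem sum_card_swap {α β : Type*} [Fintype α] [Fintype β] (R : α → β → Prop) :
    ∑ a : α, ((Finset.univ : Finset β).filter fun b => R a b).card =
    ∑ b : β, ((Finset.univ : Finset α).filter fun a => R a b).card := by
  simp only [Finset.card_filter]
  exact Finset.sum_comm

theorem Om_sum (n K : ℕ) : ∑ π : Equiv.Perm (Fin n), Om n K π = K ^ n := by
  have : ∀ π, Om n K π = ((Finset.univ : Finset (Fin n → Fin K)).filter fun w => Compat n K π (w ∘ π)).card :=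
    fun π => Om_eq_conj n K π π
  simp only [this]
  rw [sum_card_swap]
  have : ∀ w : Fin n → Fin K, ((Finset.univ : Finset (Equiv.Perm (Fin n))).filter fun π => Compat n K π (w ∘ π)).card = 1 := by
    intro w
    rw [← sort_card (fun j : Fin n => skey (w j) j) (fun a b h => Fin.ext (skey_inj h).2)]
    congr 1
    ext π
    simp only [Finset.mem_filter, Finset.mem_univ, true_and]
    rfl
  simp [this]

def LC (n K : ℕ) [NeZero n] (w : Fin n → Fin K) (φ : Equiv.Perm (Fin n)) : Prop :=
  ∀ a b, φ a < φ b → skey (w a) (φ (a + 1)) < skey (w b) (φ (b + 1))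

theorem Om_conj (n K : ℕ) [NeZero n] (φ : Equiv.Perm (Fin n)) :
    Om n K (φ * Equiv.addRight (1 : Fin n) * φ⁻¹) =
      ((Finset.univ : Finset (Fin n → Fin K)).filter fun w => LC n K w φ).card := by
  rw [Om_eq_conj n K _ φ⁻¹]
  congr 1
  ext w
  simp only [Finset.mem_filter, Finset.mem_univ, true_and]
  unfold Compat LC
  constructor
  · intro h a b hab
    have := h hab
    simpa using this
  · intro h a b hab
    have := h (φ⁻¹ a) (φ⁻¹ b) (by simpa using hab)
    simpa using this

theorem rot_cycleType (n : ℕ) [NeZero n] (hn : 2 ≤ n) :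
    (Equiv.addRight (1 : Fin n)).cycleType = {n} := by
  obtain ⟨m, rfl⟩ : ∃ m, n = m + 2 := ⟨n - 2, by omega⟩
  rw [← cycleType_finRotate]
  congr 1
  ext x
  simp

theorem mem_cyclicSet (n : ℕ) [NeZero n] (π : Equiv.Perm (Fin n)) :
    π ∈ cyclicSet n ↔ IsConj (Equiv.addRight (1 : Fin n)) π := by
  by_cases hn : 2 ≤ n
  · rw [Equiv.Perm.isConj_iff_cycleType_eq, rot_cycleType n hn]
    rw [cyclicSet, Finset.mem_filter]
    simp only [Finset.mem_univ, true_and, IsCyclicPerm, fullCycleType]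
    constructor
    · intro h
      have h1 : n ∈ π.cycleType + Multiset.replicate (n - π.support.card) 1 := by rw [h]; simp
      rw [Multiset.mem_add] at h1
      have hc := congrArg Multiset.card h
      simp at hc
      rcases h1 with h1 | h1
      · have h2 : 1 ≤ Multiset.card π.cycleType := Multiset.card_pos_iff_exists_mem.2 ⟨_, h1⟩
        have h3 : Multiset.card π.cycleType = 1 := by omega
        obtain ⟨x, hx⟩ := Multiset.card_eq_one.1 h3
        rw [hx] at h1 ⊢
        rw [Multiset.mem_singleton.1 h1]
      · have := Multiset.eq_of_mem_replicate h1
        omega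
    · intro h
      have : π.support.card = n := by rw [← Equiv.Perm.sum_cycleType, ← h]; simp
      rw [← h, this]; simp
  · have : n = 1 := by have := NeZero.pos n; omega
    subst this
    have e : π = Equiv.addRight (1 : Fin 1) := Subsingleton.elim _ _
    rw [e]
    simp only [IsConj.refl, iff_true]
    rw [cyclicSet, Finset.mem_filter]
    simp only [Finset.mem_univ, true_and, IsCyclicPerm, fullCycleType]
    have e : (Equiv.addRight (1 : Fin 1)) = 1 := Subsingleton.elim _ _
    rw [e]; simp

theorem rot_centralizer (n : ℕ) [NeZero n] :
    Nat.card (Subgroup.centralizer {Equiv.addRight (1 : Fin n)}) = n := by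
  by_cases hn : 2 ≤ n
  · rw [Equiv.Perm.nat_card_centralizer, rot_cycleType n hn]
    simp
  · have : n = 1 := by have := NeZero.pos n; omega
    subst this
    rw [Equiv.Perm.nat_card_centralizer]
    have e : (Equiv.addRight (1 : Fin 1)) = 1 := Subsingleton.elim _ _
    rw [e]; simp

theorem sum_conj (n : ℕ) [NeZero n] (F : Equiv.Perm (Fin n) → ℕ) :
    ∑ φ : Equiv.Perm (Fin n), F (φ * Equiv.addRight (1 : Fin n) * φ⁻¹) = n * ∑ π ∈ cyclicSet n, F π := by
  set c := Equiv.addRight (1 : Fin n) with hc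
  rw [← Finset.sum_fiberwise_of_maps_to (s := Finset.univ) (t := cyclicSet n) (g := fun φ => φ * c * φ⁻¹)]
  · rw [Finset.mul_sum]
    apply Finset.sum_congr rfl
    intro π hπ
    rw [mem_cyclicSet, isConj_iff] at hπ
    obtain ⟨τ, hτ⟩ := hπ
    rw [Finset.sum_congr rfl (g := fun _ => F π)]
    · rw [Finset.sum_const, smul_eq_mul]
      congr 1
      have := rot_centralizer n
      rw [← hc] at this
      conv_rhs => rw [← this]
      have h2 := Nat.subtype_card (p := fun x => x ∈ Subgroup.centralizer {c})
        ((Finset.univ : Finset (Equiv.Perm (Fin n))).filter fun x => x ∈ Subgroup.centralizer {c}) (by simp)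
      refine Eq.trans ?_ h2.symm
      have hτ' : τ * c * τ⁻¹ = π := hτ
      apply Finset.card_bij (fun φ _ => τ⁻¹ * φ)
      · intro φ hφ
        simp only [Finset.mem_filter, Finset.mem_univ, true_and] at hφ ⊢
        rw [Subgroup.mem_centralizer_singleton_iff]
        rw [← hτ'] at hφ
        have : φ * c = τ * c * τ⁻¹ * φ := by rw [← hφ]; group
        rw [mul_assoc, this]; group
      · intro a _ b _ h
        exact mul_left_cancel h
      · intro x hx
        simp only [Finset.mem_filter, Finset.mem_univ, true_and] at hx
        rw [Subgroup.mem_centralizer_singleton_iff] at hx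
        refine ⟨τ * x, ?_, by group⟩
        simp only [Finset.mem_filter, Finset.mem_univ, true_and]
        rw [← hτ', mul_assoc τ x c, hx]; group
    · intro φ hφ
      rw [(Finset.mem_filter.1 hφ).2]
  · intro φ _
    rw [mem_cyclicSet, isConj_iff]
    exact ⟨φ, rfl⟩

theorem eps_cases (u : ℕ) : eps u = 1 ∨ eps u = -1 := by unfold eps; split_ifs <;> simp

theorem eps_sq (u : ℕ) : eps u * eps u = 1 := by rcases eps_cases u with h | h <;> rw [h] <;> norm_num

def shf {α : Type*} (u : ℕ → α) : ℕ → α := fun i => u (i + 1)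

theorem shf_iter {α : Type*} (u : ℕ → α) (r : ℕ) : shf^[r] u = fun i => u (i + r) := by
  induction r with
  | zero => rfl
  | succ r ih =>
    rw [Function.iterate_succ_apply', ih]
    funext i
    simp only [shf]
    congr 1; ring

theorem shf_per {α : Type*} (u : ℕ → α) (r : ℕ) :
    Function.IsPeriodicPt shf r u ↔ ∀ i, u (i + r) = u i := by
  rw [Function.IsPeriodicPt, Function.IsFixedPt, shf_iter]
  exact funext_iff

theorem per_mul {α : Type*} {u : ℕ → α} {n : ℕ} (h : ∀ i, u (i + n) = u i) (k i : ℕ) : u (i + n * k) = u i := by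
  induction k with
  | zero => rfl
  | succ k ih => rw [mul_add, mul_one, ← add_assoc, h, ih]

theorem per_mod {α : Type*} {u : ℕ → α} {n : ℕ} (h : ∀ i, u (i + n) = u i) {a b : ℕ} (hab : a ≡ b [MOD n]) : u a = u b := by
  have e : ∀ a, u a = u (a % n) := fun a => by
    conv_lhs => rw [← Nat.mod_add_div a n]
    exact per_mul h _ _
  rw [e a, e b, hab]

abbrev mper {K : ℕ} (u : ℕ → Fin K) : ℕ := Function.minimalPeriod shf u

theorem mper_per {K : ℕ} (u : ℕ → Fin K) (i : ℕ) : u (i + mper u) = u i :=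
  (shf_per u _).1 (Function.isPeriodicPt_minimalPeriod _ _) i

theorem mper_dvd {K n : ℕ} {u : ℕ → Fin K} (h : ∀ i, u (i + n) = u i) : mper u ∣ n :=
  Function.isPeriodicPt_iff_minimalPeriod_dvd.1 ((shf_per u n).2 h)

theorem modEq_of_tail_aux {K n : ℕ} (hn : 0 < n) {u : ℕ → Fin K} (h : ∀ i, u (i + n) = u i) {a b : ℕ}
    (hle : a ≤ b) (hab : ∀ r, u (a + r) = u (b + r)) : a ≡ b [MOD mper u] := by
  obtain ⟨d, rfl⟩ := Nat.exists_eq_add_of_le hle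
  have : mper u ∣ d := by
    apply mper_dvd
    intro i
    have ha : a ≤ n * a := Nat.le_mul_of_pos_left a hn
    have h1 := hab (i + (n * a - a))
    rw [show a + (i + (n * a - a)) = i + n * a by omega,
      show a + d + (i + (n * a - a)) = (i + d) + n * a by omega, per_mul h, per_mul h] at h1
    exact h1.symm
  rw [Nat.modEq_iff_dvd' (by omega)]
  simpa using this

theorem modEq_of_tail {K n : ℕ} (hn : 0 < n) {u : ℕ → Fin K} (h : ∀ i, u (i + n) = u i) {a b : ℕ}
    (hab : ∀ r, u (a + r) = u (b + r)) : a ≡ b [MOD mper u] := by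
  rcases le_total a b with hle | hle
  · exact modEq_of_tail_aux hn h hle hab
  · exact (modEq_of_tail_aux hn h hle (fun r => (hab r).symm)).symm

/-- compatibility of a word with an ordering of positions -/
def Cmp {K : ℕ} (u : ℕ → Fin K) (F : ℕ → ℕ) : Prop :=
  ∀ a b, F a < F b → skey (u a) (F (a + 1)) < skey (u b) (F (b + 1))

def Disc (F G : ℕ → ℕ) (a b : ℕ) : Prop := (F a < F b ∧ G b < G a) ∨ (F b < F a ∧ G a < G b)

theorem disc_step {K : ℕ} {u : ℕ → Fin K} {F G : ℕ → ℕ} (hF : Cmp u F) (hG : Cmp u G) {a b : ℕ}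
    (h : Disc F G a b) : u a = u b ∧ Disc F G (a + 1) (b + 1) := by
  have key : ∀ {F G : ℕ → ℕ} (hF : Cmp u F) (hG : Cmp u G) {a b : ℕ}, F a < F b → G b < G a →
      u a = u b ∧ Disc F G (a + 1) (b + 1) := by
    intro F G hF hG a b h1 h2
    have h3 := hF a b h1
    have h4 := hG b a h2
    rw [skey_lt] at h3 h4
    have e : (u a : ℕ) = u b := by
      rcases h3 with h3 | h3
      · rcases h4 with h4 | h4
        · omega
        · exact h4.1.symm
      · exact h3.1
    refine ⟨Fin.ext e, ?_⟩
    rw [e] at h3 h4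
    simp only [lt_irrefl, false_or, true_and] at h3 h4
    unfold Disc
    rcases eps_cases (u b) with h | h <;> rw [h] at h3 h4 <;> omega
  rcases h with ⟨h1, h2⟩ | ⟨h1, h2⟩
  · exact key hF hG h1 h2
  · obtain ⟨h3, h4⟩ := key hF hG h1 h2
    refine ⟨h3.symm, ?_⟩
    unfold Disc at *
    tauto

theorem disc_all {K : ℕ} {u : ℕ → Fin K} {F G : ℕ → ℕ} (hF : Cmp u F) (hG : Cmp u G) {a b : ℕ}
    (h : Disc F G a b) (r : ℕ) : u (a + r) = u (b + r) ∧ Disc F G (a + r) (b + r) := by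
  have : Disc F G (a + r) (b + r) := by
    induction r with
    | zero => exact h
    | succ r ih => exact (disc_step hF hG ih).2
  exact ⟨(disc_step hF hG this).1, this⟩

def sgn {K : ℕ} (u : ℕ → Fin K) (r : ℕ) : ℤ := ∏ j ∈ Finset.range r, eps (u j)

theorem sgn_succ {K : ℕ} (u : ℕ → Fin K) (r : ℕ) : sgn u (r + 1) = sgn u r * eps (u r) :=
  Finset.prod_range_succ _ _

theorem sgn_cases {K : ℕ} (u : ℕ → Fin K) (r : ℕ) : sgn u r = 1 ∨ sgn u r = -1 := by
  induction r with
  | zero => left; rfl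
  | succ r ih =>
    rw [sgn_succ]
    rcases ih with h | h <;> rcases eps_cases (u r) with h' | h' <;> rw [h, h'] <;> simp

theorem sgn_add {K p : ℕ} {u : ℕ → Fin K} (h : ∀ i, u (i + p) = u i) (a : ℕ) :
    sgn u (a + p) = sgn u a * sgn u p := by
  unfold sgn
  rw [add_comm, Finset.prod_range_add, mul_comm]
  congr 1
  apply Finset.prod_congr rfl
  intro j _
  rw [add_comm, h]

theorem sgn_mul {K p : ℕ} {u : ℕ → Fin K} (h : ∀ i, u (i + p) = u i) (k : ℕ) :
    sgn u (p * k) = sgn u p ^ k := by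
  induction k with
  | zero => simp [sgn]
  | succ k ih => rw [mul_add, mul_one, sgn_add h, ih, pow_succ]

/-- no compatible ordering when there is a proper positive period -/
theorem no_cmp {K n h : ℕ} {u : ℕ → Fin K} {F : ℕ → ℕ} (hF : Cmp u F)
    (hmod : ∀ a b, F a = F b ↔ a ≡ b [MOD n]) (hn : 0 < n) (hh : ¬ n ∣ h)
    (hp : ∀ i, u (i + h) = u i) (hs : sgn u h = 1) : False := by
  have hne : ∀ a, F a ≠ F (a + h) := by
    intro a e
    rw [hmod, Nat.modEq_iff_dvd' (by omega)] at e
    simp at e; exact hh e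
  set τ : ℕ → ℤ := fun a => if F a < F (a + h) then 1 else -1 with hτ
  have step : ∀ a, τ (a + 1) = τ a * eps (u a) := by
    intro a
    have n1 := hne a
    have n2 := hne (a + 1)
    simp only [hτ]
    have e : a + 1 + h = a + h + 1 := by ring
    rw [e] at n2 ⊢
    have hpa : ((u (a + h) : Fin K) : ℕ) = u a := by rw [hp]
    rcases lt_or_gt_of_ne n1 with h1 | h1
    · have h3 := hF _ _ h1
      rw [skey_lt, hpa] at h3
      simp only [lt_irrefl, false_or, true_and] at h3
      rcases eps_cases (u a) with h | h <;> rw [h] at h3 ⊢ <;> split_ifs <;> first | rfl | omega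
    · have h3 := hF _ _ h1
      rw [skey_lt, hpa] at h3
      simp only [lt_irrefl, false_or, true_and] at h3
      rcases eps_cases (u a) with h | h <;> rw [h] at h3 ⊢ <;> split_ifs <;> first | rfl | omega
  have all : ∀ a, τ a = τ 0 * sgn u a := by
    intro a
    induction a with
    | zero => simp [sgn]
    | succ a ih => rw [step, ih, sgn_succ]; ring
  have const : ∀ k, τ (h * k) = τ 0 := by
    intro k
    rw [all, sgn_mul hp, hs]; simp
  have hend : F (h * n) = F (h * 0) := by
    rw [hmod, Nat.mul_zero]
    exact (Nat.modEq_zero_iff_dvd).2 (dvd_mul_left _ _)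
  have hcase : (∀ k, F (h * k) < F (h * (k + 1))) ∨ (∀ k, F (h * (k + 1)) < F (h * k)) := by
    by_cases h0 : F 0 < F (0 + h)
    · left
      intro k
      have := const k
      simp only [hτ, h0, if_true] at this
      rw [mul_add, mul_one]
      by_contra hc
      rw [if_neg hc] at this
      omega
    · right
      intro k
      have := const k
      simp only [hτ, h0, if_false] at this
      rw [mul_add, mul_one]
      have n1 := hne (h * k)
      by_contra hc
      rw [if_pos (by omega)] at this
      omega
  rcases hcase with hc | hc
  · have := strictMono_nat_of_lt_succ (f := fun k => F (h * k)) hc hn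
    simp only [] at this
    omega
  · have := strictAnti_nat_of_succ_lt (f := fun k => F (h * k)) hc hn
    simp only [] at this
    omega

theorem realize {K : ℕ} (u : ℕ → Fin K) : ∃ x : ℕ → ℝ,
    (∀ a, x a = (u a : ℕ) + (eps (u a) : ℝ) * (x (a + 1) / (4 * K + 2))) ∧
    (∀ a, |x a| ≤ 2 * K) ∧ (∀ p, (∀ i, u (i + p) = u i) → ∀ a, x (a + p) = x a) := by
  set B : ℝ := 4 * K + 2 with hB
  have hB2 : (2:ℝ) ≤ B := by rw [hB]; have : (0:ℝ) ≤ K := Nat.cast_nonneg K; linarith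
  have hB0 : (0:ℝ) < B := by linarith
  set f : ℕ → ℕ → ℝ := fun a r => (∏ j ∈ Finset.range r, (eps (u (a + j)) : ℝ)) * (u (a + r) : ℕ) * (B⁻¹) ^ r with hf
  have hBi : B⁻¹ ≤ 1 / 2 := by rw [inv_eq_one_div]; exact one_div_le_one_div_of_le (by norm_num) hB2
  have hbound : ∀ a r, ‖f a r‖ ≤ K * (1 / 2 : ℝ) ^ r := by
    intro a r
    simp only [hf, norm_mul, norm_pow, Real.norm_eq_abs]
    have e1 : |∏ j ∈ Finset.range r, (eps (u (a + j)) : ℝ)| = 1 := by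
      rw [Finset.abs_prod]
      apply Finset.prod_eq_one
      intro j _
      rcases eps_cases (u (a + j)) with h | h <;> rw [h] <;> simp
    rw [e1, one_mul, Nat.abs_cast, abs_of_pos (inv_pos.2 hB0)]
    have : ((u (a + r) : ℕ) : ℝ) ≤ K := by exact_mod_cast (u (a + r)).2.le
    gcongr
  have hgeo : HasSum (fun r => (K:ℝ) * (1 / 2 : ℝ) ^ r) (K * 2) := hasSum_geometric_two.mul_left _
  have hsum : ∀ a, Summable (f a) := fun a => Summable.of_norm_bounded hgeo.summable (hbound a)
  refine ⟨fun a => ∑' r, f a r, ?_, ?_, ?_⟩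
  · intro a
    simp only
    rw [(hsum a).tsum_eq_zero_add]
    congr 1
    · simp [hf]
    · rw [← tsum_div_const, ← tsum_mul_left]
      congr 1
      funext r
      simp only [hf]
      rw [Finset.prod_range_succ']
      have : ∏ j ∈ Finset.range r, (eps (u (a + (j + 1))) : ℝ) = ∏ j ∈ Finset.range r, (eps (u (a + 1 + j)) : ℝ) :=
        Finset.prod_congr rfl (fun j _ => by rw [add_right_comm a 1 j, add_assoc])
      rw [this, show a + (r + 1) = a + 1 + r by ring, add_zero, pow_succ]; ring
  · intro a
    rw [← Real.norm_eq_abs, mul_comm]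
    exact tsum_of_norm_bounded hgeo (hbound a)
  · intro p hp a
    simp only
    congr 1
    funext r
    simp only [hf]
    have : ∀ j, u (a + p + j) = u (a + j) := fun j => by rw [add_right_comm, hp]
    simp only [this]

theorem realize_lt {K : ℕ} {u : ℕ → Fin K} {x : ℕ → ℝ}
    (h1 : ∀ a, x a = (u a : ℕ) + (eps (u a) : ℝ) * (x (a + 1) / (4 * K + 2)))
    (h2 : ∀ a, |x a| ≤ 2 * K) {a b : ℕ} (h : u a < u b) : x a < x b := by
  have hB0 : (0:ℝ) < 4 * K + 2 := by positivity
  have hs : ∀ a, |(eps (u a) : ℝ) * (x (a + 1) / (4 * K + 2))| < 1 / 2 := by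
    intro a
    have : |(eps (u a) : ℝ)| = 1 := by
      rcases eps_cases (u a) with h | h <;> rw [h] <;> simp
    rw [abs_mul, this, one_mul, abs_div, abs_of_pos hB0, div_lt_iff₀ hB0]
    have := h2 (a + 1)
    linarith
  have ha := abs_lt.1 (hs a)
  have hb := abs_lt.1 (hs b)
  rw [h1 a, h1 b]
  have : ((u a : ℕ) : ℝ) + 1 ≤ (u b : ℕ) := by exact_mod_cast h
  linarith [ha.2, hb.1]

theorem realize_eq {K : ℕ} {u : ℕ → Fin K} {x : ℕ → ℝ}
    (h1 : ∀ a, x a = (u a : ℕ) + (eps (u a) : ℝ) * (x (a + 1) / (4 * K + 2)))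
    (h2 : ∀ a, |x a| ≤ 2 * K) {a b : ℕ} (h : x a = x b) : u a = u b ∧ x (a + 1) = x (b + 1) := by
  have hB0 : (0:ℝ) < 4 * K + 2 := by positivity
  have e : u a = u b := by
    rcases lt_trichotomy (u a) (u b) with h' | h' | h'
    · have := realize_lt h1 h2 h'; linarith
    · exact h'
    · have := realize_lt h1 h2 h'; linarith
  refine ⟨e, ?_⟩
  rw [h1 a, h1 b, e] at h
  have h := add_left_cancel h
  have hne : (eps (u b) : ℝ) ≠ 0 := by exact_mod_cast eps_ne _
  have h := mul_left_cancel₀ hne h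
  field_simp at h
  exact h

theorem realize_lt' {K : ℕ} {u : ℕ → Fin K} {x : ℕ → ℝ}
    (h1 : ∀ a, x a = (u a : ℕ) + (eps (u a) : ℝ) * (x (a + 1) / (4 * K + 2)))
    (h2 : ∀ a, |x a| ≤ 2 * K) {a b : ℕ} (h : x a < x b) :
    u a < u b ∨ (u a = u b ∧ (eps (u a) : ℝ) * x (a + 1) < (eps (u a) : ℝ) * x (b + 1)) := by
  have hB0 : (0:ℝ) < 4 * K + 2 := by positivity
  rcases lt_trichotomy (u a) (u b) with h' | h' | h'
  · exact Or.inl h'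
  · right
    refine ⟨h', ?_⟩
    rw [h1 a, h1 b, ← h'] at h
    have h := lt_of_add_lt_add_left h
    rw [← mul_div_assoc, ← mul_div_assoc, div_lt_div_iff_of_pos_right hB0] at h
    exact h
  · have := realize_lt h1 h2 h'; linarith

def FF {n : ℕ} [NeZero n] (φ : Equiv.Perm (Fin n)) (a : ℕ) : ℕ := φ (Fin.ofNat n a)

theorem ofNat_eq_iff {n : ℕ} [NeZero n] (a b : ℕ) : Fin.ofNat n a = Fin.ofNat n b ↔ a ≡ b [MOD n] := by
  rw [Fin.ext_iff]; rfl

theorem ofNat_val_self {n : ℕ} [NeZero n] (a : Fin n) : Fin.ofNat n a = a := by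
  apply Fin.ext
  simp

theorem ofNat_succ {n : ℕ} [NeZero n] (a : ℕ) : Fin.ofNat n (a + 1) = Fin.ofNat n a + 1 := by
  apply Fin.ext
  rw [Fin.val_add]
  simp [Nat.add_mod]

theorem FF_mod {n : ℕ} [NeZero n] (φ : Equiv.Perm (Fin n)) (a b : ℕ) : FF φ a = FF φ b ↔ a ≡ b [MOD n] := by
  unfold FF
  rw [← ofNat_eq_iff, ← Fin.ext_iff, φ.injective.eq_iff]

def tl {n K : ℕ} [NeZero n] (w : Fin n → Fin K) (a : ℕ) : Fin K := w (Fin.ofNat n a)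

theorem LC_iff {n K : ℕ} [NeZero n] (w : Fin n → Fin K) (φ : Equiv.Perm (Fin n)) :
    LC n K w φ ↔ Cmp (tl w) (FF φ) := by
  unfold LC Cmp FF tl
  constructor
  · intro h a b hab
    have := h _ _ (Fin.lt_def.2 hab)
    rwa [ofNat_succ, ofNat_succ]
  · intro h a b hab
    have := h a b (by rw [ofNat_val_self, ofNat_val_self]; exact hab)
    rwa [ofNat_succ, ofNat_succ, ofNat_val_self, ofNat_val_self] at this

theorem FF_inj {n : ℕ} [NeZero n] {φ ψ : Equiv.Perm (Fin n)} (h : ∀ a b, ¬ Disc (FF φ) (FF ψ) a b) : φ = ψ := by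
  have hm : StrictMono (ψ ∘ φ.symm) := by
    intro i j hij
    have h1 := h (φ.symm i) (φ.symm j)
    unfold Disc FF at h1
    rw [ofNat_val_self, ofNat_val_self] at h1
    simp only [Equiv.apply_symm_apply] at h1
    have h2 : (ψ (φ.symm i)) ≠ ψ (φ.symm j) := by
      simpa using hij.ne
    have h3 : (ψ (φ.symm i)).val ≠ (ψ (φ.symm j)).val := fun e => h2 (Fin.ext e)
    have : i.val < j.val := hij
    simp only [Function.comp, Fin.lt_def]
    omega
  have : (ψ ∘ φ.symm) = id := by
    apply (StrictMono.range_inj hm strictMono_id).1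
    rw [Set.range_id, Set.range_eq_univ]
    exact ψ.surjective.comp φ.symm.surjective
  ext a
  have := congrFun this (φ a)
  simp at this
  rw [this]

theorem exists_cmp {K n : ℕ} [NeZero n] {u : ℕ → Fin K} (hu : ∀ i, u (i + n) = u i) (t : ℕ → ℤ)
    (ht : ∀ a, t (a + n) = t a) (hts : ∀ a, t (a + 1) = eps (u a) * t a)
    (htn : ∀ a b, a ≡ b [MOD mper u] → t a = t b → a ≡ b [MOD n]) :
    ∃ φ : Equiv.Perm (Fin n), Cmp u (FF φ) ∧
      ∀ a b, a ≡ b [MOD mper u] → (FF φ a < FF φ b ↔ t a < t b) := by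
  obtain ⟨x, h1, h2, h3⟩ := realize u
  have hxn := h3 n hu
  have hxp := h3 _ (mper_per u)
  have hxe : ∀ a b, x a = x b → a ≡ b [MOD mper u] := by
    intro a b hab
    have : ∀ r, x (a + r) = x (b + r) := by
      intro r
      induction r with
      | zero => exact hab
      | succ r ih => exact (realize_eq h1 h2 ih).2
    exact modEq_of_tail (NeZero.pos n) hu (fun r => (realize_eq h1 h2 (this r)).1)
  set ky : Fin n → ℝ ×ₗ ℤ := fun j => toLex (x j, t j) with hky
  have hinj : Function.Injective ky := by
    intro i j h
    have := toLex.injective h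
    simp only [Prod.mk.injEq] at this
    have := htn i j (hxe _ _ this.1) this.2
    rw [← ofNat_eq_iff, ofNat_val_self, ofNat_val_self] at this
    exact this
  set π := Tuple.sort ky
  have hs : StrictMono (ky ∘ π) :=
    (Tuple.monotone_sort ky).strictMono_of_injective (hinj.comp π.injective)
  have hlt : ∀ a b : ℕ, FF π⁻¹ a < FF π⁻¹ b ↔ x a < x b ∨ x a = x b ∧ t a < t b := by
    intro a b
    have e : FF π⁻¹ a < FF π⁻¹ b ↔ ky (Fin.ofNat n a) < ky (Fin.ofNat n b) := by
      unfold FF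
      rw [← Fin.lt_def, ← hs.lt_iff_lt]
      simp
    have m : ∀ a, ((Fin.ofNat n a).val) ≡ a [MOD n] := fun a => by
      simp [Nat.ModEq]
    rw [e]
    simp only [hky, Prod.Lex.lt_iff, ofLex_toLex]
    rw [per_mod hxn (m a), per_mod hxn (m b), per_mod ht (m a), per_mod ht (m b)]
  refine ⟨π⁻¹, ?_, ?_⟩
  · intro a b hab
    rw [hlt] at hab
    rw [skey_lt]
    have fin : u a = u b → ((eps (u a) : ℝ) * x (a + 1) < (eps (u a) : ℝ) * x (b + 1) ∨
      x (a + 1) = x (b + 1) ∧ eps (u a) * t (a + 1) < eps (u a) * t (b + 1)) →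
        (eps (u a) : ℤ) * (FF π⁻¹ (a + 1) : ℤ) < eps (u b) * (FF π⁻¹ (b + 1) : ℤ) := by
      intro e h
      rw [← e]
      rcases eps_cases (u a) with h' | h'
      · rw [h'] at h ⊢
        have := (hlt (a + 1) (b + 1)).2 (by simpa using h)
        omega
      · rw [h'] at h ⊢
        have := (hlt (b + 1) (a + 1)).2 (by
          rcases h with h | h
          · left; simpa using h
          · right; exact ⟨h.1.symm, by simpa using h.2⟩)
        omega
    rcases hab with hab | ⟨hab, htab⟩
    · rcases realize_lt' h1 h2 hab with h | ⟨h, h'⟩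
      · left; exact h
      · right
        exact ⟨by rw [h], fin h (Or.inl h')⟩
    · obtain ⟨e, e'⟩ := realize_eq h1 h2 hab
      right
      refine ⟨by rw [e], fin e (Or.inr ⟨e', ?_⟩)⟩
      rw [hts, hts, ← e, ← mul_assoc, ← mul_assoc, eps_sq, one_mul, one_mul]
      exact htab
  · intro a b hab
    rw [hlt, per_mod hxp hab]
    simp

theorem L_count {K n : ℕ} [NeZero n] {u : ℕ → Fin K} (hu : ∀ i, u (i + n) = u i) :
    ((Finset.univ : Finset (Equiv.Perm (Fin n))).filter fun φ => Cmp u (FF φ)).card =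
      if mper u = n then 1 else if 2 * mper u = n ∧ sgn u (mper u) = -1 then 2 else 0 := by
  have hn : 0 < n := NeZero.pos n
  have hdvd := mper_dvd hu
  have hp0 : 0 < mper u := Nat.pos_of_dvd_of_pos hdvd hn
  split_ifs with h1 h2
  · rw [Finset.card_eq_one]
    obtain ⟨φ, hφ, _⟩ := exists_cmp hu (fun _ => 0) (fun _ => rfl) (fun _ => by simp)
      (fun a b h _ => by rwa [h1] at h)
    refine ⟨φ, ?_⟩
    ext ψ
    simp only [Finset.mem_filter, Finset.mem_univ, true_and, Finset.mem_singleton]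
    constructor
    · intro hψ
      apply FF_inj
      intro a b hd
      have := modEq_of_tail hn hu (fun r => (disc_all hψ hφ hd r).1)
      rw [h1, ← FF_mod ψ] at this
      unfold Disc at hd; omega
    · rintro rfl; exact hφ
  · obtain ⟨h2, h3⟩ := h2
    set p := mper u with hp
    have hper : ∀ i, u (i + p) = u i := mper_per u
    have hsp : ∀ a, sgn u (a + p) = - sgn u a := fun a => by rw [sgn_add hper, h3]; ring
    have hmodc : ∀ a b, a ≡ b [MOD p] → a ≡ b [MOD n] ∨ a ≡ b + p [MOD n] := by
      intro a b h
      have hx : ∀ a, a % n = a % p ∨ a % n = a % p + p := by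
        intro a
        rw [← h2, mul_comm, Nat.mod_mul]
        rcases Nat.mod_two_eq_zero_or_one (a / p) with h | h <;> rw [h] <;> simp
      have hx2 : ∀ a, (a + p) % p = a % p := by simp
      have hlt := Nat.mod_lt a hp0
      have hltb := Nat.mod_lt b hp0
      unfold Nat.ModEq at *
      rcases hx a with ha | ha <;> rcases hx b with hb | hb
      · left; omega
      · right
        rw [Nat.add_mod, hb, ha, Nat.mod_eq_of_lt (show p < n by omega)]
        rw [show b % p + p + p = b % p + n by omega, Nat.add_mod_right,
          Nat.mod_eq_of_lt (show b % p < n by omega)]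
        exact h
      · right
        rw [Nat.add_mod, hb, ha, Nat.mod_eq_of_lt (show p < n by omega),
          Nat.mod_eq_of_lt (show b % p + p < n by omega)]
        omega
      · left; omega
    have hex : ∀ θ : ℤ, θ ≠ 0 → ∃ φ : Equiv.Perm (Fin n), Cmp u (FF φ) ∧
      ∀ a b, a ≡ b [MOD p] → (FF φ a < FF φ b ↔ θ * sgn u a < θ * sgn u b) := by
      intro θ hθ
      apply exists_cmp hu (fun a => θ * sgn u a)
      · intro a
        rw [← h2, two_mul, ← add_assoc, hsp, hsp, neg_neg]
      · intro a
        rw [sgn_succ]; ring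
      · intro a b hab hθs
        rcases hmodc a b hab with h | h
        · exact h
        · exfalso
          have e := mul_left_cancel₀ hθ hθs
          have : sgn u a = sgn u (b + p) := by
            apply per_mod (n := n) _ h
            intro i
            rw [← h2, two_mul, ← add_assoc, hsp, hsp, neg_neg]
          rw [this, hsp] at e
          rcases sgn_cases u b with h | h <;> rw [h] at e <;> omega
    have huniq : ∀ φ ψ : Equiv.Perm (Fin n), Cmp u (FF φ) → Cmp u (FF ψ) →
        (FF φ 0 < FF φ p ↔ FF ψ 0 < FF ψ p) → φ = ψ := by
      intro φ ψ hφ hψ h0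
      apply FF_inj
      intro a b hd
      have hm := modEq_of_tail hn hu (fun r => (disc_all hφ hψ hd r).1)
      rcases hmodc b a hm.symm with h | h
      · rw [← FF_mod φ] at h
        unfold Disc at hd; omega
      · have ha : a ≤ n * a := Nat.le_mul_of_pos_left a hn
        have hd2 := (disc_all hφ hψ hd (n * a - a)).2
        have e1 : a + (n * a - a) ≡ 0 [MOD n] := by
          rw [show a + (n * a - a) = n * a by omega]
          exact (Nat.modEq_zero_iff_dvd).2 (dvd_mul_right _ _)
        have e2 : b + (n * a - a) ≡ p [MOD n] := by
          have h3 : b + (n * a - a) ≡ a + p + (n * a - a) [MOD n] := h.add_right _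
          rw [show a + p + (n * a - a) = n * a + p by omega] at h3
          refine h3.trans ?_
          simp [Nat.ModEq]
        unfold Disc at hd2
        rw [(FF_mod φ _ _).2 e1, (FF_mod ψ _ _).2 e1, (FF_mod φ _ _).2 e2, (FF_mod ψ _ _).2 e2] at hd2
        omega
    have h0p : 0 ≡ p [MOD p] := by simp [Nat.ModEq]
    obtain ⟨φ, hφ, hφ'⟩ := hex 1 (by norm_num)
    obtain ⟨ψ, hψ, hψ'⟩ := hex (-1) (by norm_num)
    have hf := hφ' 0 p h0p
    have hg := hψ' 0 p h0p
    have s0 : sgn u 0 = 1 := by simp [sgn]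
    rw [s0, h3] at hf hg
    norm_num at hf hg
    rw [Finset.card_eq_two]
    refine ⟨φ, ψ, ?_, ?_⟩
    · rintro rfl; omega
    · ext χ
      simp only [Finset.mem_filter, Finset.mem_univ, true_and, Finset.mem_insert, Finset.mem_singleton]
      constructor
      · intro hχ
        by_cases hc : FF χ 0 < FF χ p
        · right; exact huniq _ _ hχ hψ (by tauto)
        · left; exact huniq _ _ hχ hφ (by constructor <;> intro h <;> omega)
      · rintro (rfl | rfl) <;> assumption
  · rw [Finset.card_eq_zero, Finset.filter_eq_empty_iff]
    intro φ _ hφ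
    have hper : ∀ i, u (i + mper u) = u i := mper_per u
    obtain ⟨k, hk⟩ := hdvd
    rcases sgn_cases u (mper u) with hs | hs
    · refine no_cmp hφ (FF_mod φ) hn (h := mper u) ?_ hper hs
      intro hd
      exact h1 (Nat.dvd_antisymm ⟨k, hk⟩ hd)
    · have hne : 2 * mper u ≠ n := fun h => h2 ⟨h, hs⟩
      refine no_cmp hφ (FF_mod φ) hn (h := mper u * 2) ?_ (fun i => per_mul hper 2 i) ?_
      · intro hd
        have hle := Nat.le_of_dvd (by omega) hd
        have : k = 0 ∨ k = 1 ∨ k = 2 ∨ 3 ≤ k := by omega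
        rcases this with h | h | h | h
        · subst h; omega
        · subst h; omega
        · subst h; omega
        · nlinarith
      · rw [sgn_mul hper, hs]; norm_num

theorem tl_inj {n K : ℕ} [NeZero n] : Function.Injective (tl : (Fin n → Fin K) → ℕ → Fin K) := by
  intro w w' h
  funext j
  have := congrFun h j
  unfold tl at this
  rwa [ofNat_val_self] at this

theorem tl_per {n K : ℕ} [NeZero n] (w : Fin n → Fin K) (i : ℕ) : tl w (i + n) = tl w i := by
  unfold tl
  congr 1
  rw [ofNat_eq_iff]
  simp [Nat.ModEq]

def PW (n K : ℕ) [NeZero n] : Finset (ℕ → Fin K) := Finset.univ.map ⟨tl (n := n), tl_inj⟩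

theorem mem_PW {n K : ℕ} [NeZero n] (u : ℕ → Fin K) : u ∈ PW n K ↔ ∀ i, u (i + n) = u i := by
  unfold PW
  simp only [Finset.mem_map, Finset.mem_univ, true_and, Function.Embedding.coeFn_mk]
  constructor
  · rintro ⟨w, rfl⟩; exact tl_per w
  · intro h
    refine ⟨fun j => u j, ?_⟩
    funext a
    unfold tl
    apply per_mod h
    simp [Nat.ModEq]

theorem card_PW (n K : ℕ) [NeZero n] : (PW n K).card = K ^ n := by
  simp [PW]

def aC (K p : ℕ) : ℕ := Set.ncard {u : ℕ → Fin K | mper u = p}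
def oC (K p : ℕ) : ℕ := Set.ncard {u : ℕ → Fin K | mper u = p ∧ sgn u p = -1}

theorem per_of_dvd {K p n : ℕ} {u : ℕ → Fin K} (h : mper u = p) (hd : p ∣ n) (i : ℕ) : u (i + n) = u i := by
  obtain ⟨k, rfl⟩ := hd
  rw [← h]
  exact per_mul (mper_per u) _ _

theorem aC_eq {K p n : ℕ} [NeZero n] (hd : p ∣ n) : aC K p = ((PW n K).filter fun u => mper u = p).card := by
  rw [← Set.ncard_coe_finset, aC]
  congr 1
  ext u
  simp only [Set.mem_ofPred_eq, Finset.coe_filter, mem_PW]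
  exact ⟨fun h => ⟨per_of_dvd h hd, h⟩, fun h => h.2⟩

theorem oC_eq {K p n : ℕ} [NeZero n] (hd : p ∣ n) :
    oC K p = ((PW n K).filter fun u => mper u = p ∧ sgn u p = -1).card := by
  rw [← Set.ncard_coe_finset, oC]
  congr 1
  ext u
  simp only [Set.mem_ofPred_eq, Finset.coe_filter, mem_PW]
  exact ⟨fun h => ⟨per_of_dvd h.1 hd, h⟩, fun h => h.2⟩

theorem E1 (K n : ℕ) (hn : 0 < n) : ∑ p ∈ n.divisors, aC K p = K ^ n := by
  have : NeZero n := ⟨hn.ne'⟩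
  rw [← card_PW, Finset.card_eq_sum_card_fiberwise (f := fun u => mper u) (t := n.divisors)]
  · apply Finset.sum_congr rfl
    intro p hp
    rw [aC_eq (Nat.dvd_of_mem_divisors hp)]
  · intro u hu
    have hu := (mem_PW u).1 hu
    exact Finset.mem_coe.2 (Nat.mem_divisors.2 ⟨mper_dvd hu, hn.ne'⟩)

theorem sum_eps (k : ℕ) : ∑ l : Fin (2 * k), eps l = 0 := by
  rw [Fin.sum_univ_eq_sum_range (fun l => eps l)]
  induction k with
  | zero => simp
  | succ k ih =>
    rw [show 2 * (k + 1) = 2 * k + 1 + 1 by ring, Finset.sum_range_succ, Finset.sum_range_succ, ih]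
    have h1 : ¬ Odd (2 * k) := by simp
    have h2 : Odd (2 * k + 1) := by simp
    simp [eps, h1, h2]

theorem sum_sgn (k m : ℕ) [NeZero m] : ∑ u ∈ PW m (2 * k), sgn u m = 0 := by
  rw [PW, Finset.sum_map]
  simp only [Function.Embedding.coeFn_mk]
  have : ∀ w : Fin m → Fin (2 * k), sgn (tl w) m = ∏ j, eps (w j) := by
    intro w
    unfold sgn
    rw [← Fin.prod_univ_eq_prod_range (fun j => eps (tl w j))]
    apply Finset.prod_congr rfl
    intro j _
    unfold tl
    rw [ofNat_val_self]
  simp only [this]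
  have h := Finset.prod_univ_sum (fun _ : Fin m => (Finset.univ : Finset (Fin (2 * k)))) (fun _ l => eps l)
  rw [Fintype.piFinset_univ] at h
  rw [← h]
  simp only [sum_eps]
  simp [NeZero.ne m]

theorem E2a (k m : ℕ) [NeZero m] :
    2 * ((PW m (2 * k)).filter fun u => sgn u m = -1).card = (2 * k) ^ m := by
  have h1 : ∀ u ∈ PW m (2 * k), sgn u m = 1 - 2 * (if sgn u m = -1 then 1 else 0) := by
    intro u _
    rcases sgn_cases u m with h | h <;> rw [h] <;> norm_num
  have h2 := sum_sgn k m
  rw [Finset.sum_congr rfl h1, Finset.sum_sub_distrib, ← Finset.mul_sum] at h2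
  rw [← Finset.natCast_card_filter, Finset.sum_const, card_PW] at h2
  simp only [nsmul_eq_mul, mul_one] at h2
  have : ((2 * ((PW m (2 * k)).filter fun u => sgn u m = -1).card : ℕ) : ℤ) = (((2 * k) ^ m : ℕ) : ℤ) := by
    push_cast at h2 ⊢
    linarith
  exact_mod_cast this

theorem E2 (k m : ℕ) (hm : 0 < m) :
    2 * ∑ d ∈ m.divisors.filter (fun d => Odd d), oC (2 * k) (m / d) = (2 * k) ^ m := by
  have : NeZero m := ⟨hm.ne'⟩
  rw [← E2a]
  congr 1
  rw [Finset.card_eq_sum_card_fiberwise (f := fun u => mper u) (t := m.divisors)]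
  · rw [← Nat.sum_div_divisors, Finset.sum_filter]
    apply Finset.sum_congr rfl
    intro d hd
    have hd' := Nat.dvd_of_mem_divisors hd
    have hdvd : m / d ∣ m := Nat.div_dvd_of_dvd hd'
    have hq : m / d * d = m := Nat.div_mul_cancel hd'
    have hsg : ∀ u : ℕ → Fin (2 * k), mper u = m / d → sgn u m = sgn u (m / d) ^ d := by
      intro u hu
      rw [← sgn_mul (by rw [← hu]; exact mper_per u), hq]
    rw [Finset.filter_filter]
    split_ifs with hod
    · rw [oC_eq hdvd]
      congr 1
      apply Finset.filter_congr
      intro u _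
      constructor
      · rintro ⟨h1, h2⟩
        refine ⟨?_, h1⟩
        rw [hsg u h1, h2, hod.neg_one_pow]
      · rintro ⟨h1, h2⟩
        refine ⟨h2, ?_⟩
        rw [hsg u h2] at h1
        rcases sgn_cases u (m / d) with h | h
        · rw [h, one_pow] at h1; norm_num at h1
        · exact h
    · symm
      rw [Finset.card_eq_zero, Finset.filter_eq_empty_iff]
      rintro u _ ⟨h1, h2⟩
      rw [hsg u h2] at h1
      rw [Nat.not_odd_iff_even] at hod
      rcases sgn_cases u (m / d) with h | h
      · rw [h, one_pow] at h1; norm_num at h1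
      · rw [h, hod.neg_one_pow] at h1; norm_num at h1
  · intro u hu
    have hu := (mem_PW u).1 (Finset.mem_filter.1 hu).1
    exact Finset.mem_coe.2 (Nat.mem_divisors.2 ⟨mper_dvd hu, hm.ne'⟩)

def CC (K n : ℕ) : ℕ := aC K n + if 2 ∣ n then 2 * oC K (n / 2) else 0

theorem CC_eq (n K : ℕ) [NeZero n] :
    ∑ φ : Equiv.Perm (Fin n), Om n K (φ * Equiv.addRight (1 : Fin n) * φ⁻¹) = CC K n := by
  simp only [Om_conj, LC_iff]
  rw [sum_card_swap (fun (φ : Equiv.Perm (Fin n)) (w : Fin n → Fin K) => Cmp (tl w) (FF φ))]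
  simp only [fun w : Fin n → Fin K => L_count (tl_per w)]
  have : ∑ u ∈ PW n K, (if mper u = n then 1 else if 2 * mper u = n ∧ sgn u (mper u) = -1 then 2 else 0) =
    ∑ w : Fin n → Fin K, (if mper (tl w) = n then 1 else if 2 * mper (tl w) = n ∧ sgn (tl w) (mper (tl w)) = -1 then 2 else 0) := by
    rw [PW, Finset.sum_map]; rfl
  rw [← this]
  have hn := NeZero.pos n
  have h2 : ∀ u ∈ PW n K, (if mper u = n then 1 else if 2 * mper u = n ∧ sgn u (mper u) = -1 then 2 else 0) =
    (if mper u = n then 1 else 0) + 2 * (if 2 * mper u = n ∧ sgn u (mper u) = -1 then 1 else 0) := by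
    intro u _
    split_ifs <;> first | rfl | omega
  rw [Finset.sum_congr rfl h2, Finset.sum_add_distrib, ← Finset.mul_sum, ← Finset.card_filter, ← Finset.card_filter,
    CC, ← aC_eq dvd_rfl]
  congr 1
  split_ifs with hd
  · rw [oC_eq (Nat.div_dvd_of_dvd hd)]
    congr 2
    apply Finset.filter_congr
    intro u _
    constructor
    · rintro ⟨h1, h3⟩
      have : mper u = n / 2 := by omega
      exact ⟨this, by rw [← this]; exact h3⟩
    · rintro ⟨h1, h3⟩
      exact ⟨by omega, by rw [h1]; exact h3⟩
  · rw [Finset.filter_false_of_mem]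
    · rfl
    · rintro u _ ⟨h1, _⟩
      omega

theorem E3 (k n : ℕ) (hn : 0 < n) :
    ∑ d ∈ n.divisors.filter (fun d => Odd d), CC (2 * k) (n / d) = (2 * k) ^ n := by
  by_cases h2 : 2 ∣ n
  · obtain ⟨m, rfl⟩ := h2
    have hm : 0 < m := by omega
    rw [← E1 (2 * k) (2 * m) hn, ← Nat.sum_div_divisors,
      ← Finset.sum_filter_add_sum_filter_not (2 * m).divisors (fun d => Odd d)]
    unfold CC
    rw [Finset.sum_add_distrib]
    congr 1
    have e1 : (2 * m).divisors.filter (fun d => Odd d) = m.divisors.filter (fun d => Odd d) := by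
      ext d
      simp only [Finset.mem_filter, Nat.mem_divisors]
      constructor
      · rintro ⟨⟨h1, _⟩, h3⟩
        exact ⟨⟨(Nat.Coprime.dvd_of_dvd_mul_left (Nat.coprime_two_right.2 h3) h1), hm.ne'⟩, h3⟩
      · rintro ⟨⟨h1, _⟩, h3⟩
        exact ⟨⟨h1.mul_left 2, hn.ne'⟩, h3⟩
    have e2 : (2 * m).divisors.filter (fun d => ¬ Odd d) = m.divisors.image (fun d => 2 * d) := by
      ext d
      simp only [Finset.mem_filter, Nat.mem_divisors, Finset.mem_image, Nat.not_odd_iff_even]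
      constructor
      · rintro ⟨⟨h1, _⟩, h3⟩
        obtain ⟨e, rfl⟩ := h3.two_dvd
        exact ⟨e, ⟨Nat.dvd_of_mul_dvd_mul_left (by norm_num) h1, hm.ne'⟩, rfl⟩
      · rintro ⟨e, ⟨h1, _⟩, rfl⟩
        exact ⟨⟨Nat.mul_dvd_mul_left 2 h1, hn.ne'⟩, by simp⟩
    rw [e1, e2, Finset.sum_image (by intro a _ b _ h; simpa using h)]
    have e3 : ∀ d ∈ m.divisors, aC (2 * k) (2 * m / (2 * d)) = aC (2 * k) (m / d) := by
      intro d _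
      rw [Nat.mul_div_mul_left _ _ (by norm_num)]
    rw [Finset.sum_congr rfl e3, Nat.sum_div_divisors m (aC (2 * k)), E1 _ _ hm, ← E2 k m hm, Finset.mul_sum]
    apply Finset.sum_congr rfl
    intro d hd
    have hd' := Nat.dvd_of_mem_divisors (Finset.mem_filter.1 hd).1
    rw [Nat.mul_div_assoc _ hd', if_pos (dvd_mul_right _ _)]
    simp
  · have hod : Odd n := Nat.odd_iff.2 (by omega)
    rw [Finset.filter_true_of_mem (fun d hd => hod.of_dvd_nat (Nat.dvd_of_mem_divisors hd)),
      Nat.sum_div_divisors n (CC (2 * k)), ← E1 _ _ hn]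
    apply Finset.sum_congr rfl
    intro d hd
    have := hod.of_dvd_nat (Nat.dvd_of_mem_divisors hd)
    rw [CC, if_neg, add_zero]
    have := Nat.odd_iff.1 this
    omega

theorem E4 (k n : ℕ) (hn : 0 < n) :
    (CC (2 * k) n : ℚ) = ∑ d ∈ n.divisors.filter (fun d => Odd d),
      ((ArithmeticFunction.moebius d : ℤ) : ℚ) * (2 * k : ℚ) ^ (n / d) := by
  obtain ⟨s, j, hj, rfl⟩ := Nat.exists_eq_two_pow_mul_odd hn.ne'
  have hfil : ∀ i, Odd i → (2 ^ s * i).divisors.filter (fun d => Odd d) = i.divisors := by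
    intro i hi
    have hi0 : i ≠ 0 := by rintro rfl; simp at hi
    ext d
    simp only [Finset.mem_filter, Nat.mem_divisors]
    constructor
    · rintro ⟨⟨h1, _⟩, h3⟩
      exact ⟨Nat.Coprime.dvd_of_dvd_mul_left (Nat.Coprime.pow_right s (Nat.coprime_two_right.2 h3)) h1, hi0⟩
    · rintro ⟨h1, _⟩
      exact ⟨⟨h1.mul_left _, by positivity⟩, hi.of_dvd_nat h1⟩
  have key := (ArithmeticFunction.sum_eq_iff_sum_mul_moebius_eq_on (R := ℚ)
    (f := fun i => (CC (2 * k) (2 ^ s * i) : ℚ)) (g := fun i => (2 * k : ℚ) ^ (2 ^ s * i)) {i | Odd i}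
    (fun m n hmn hn => Odd.of_dvd_nat hn hmn)).1 (by
      intro i hi0 hi
      have h := E3 k (2 ^ s * i) (by positivity)
      rw [hfil i hi] at h
      have h' : ∑ d ∈ i.divisors, CC (2 * k) (2 ^ s * (i / d)) = (2 * k) ^ (2 ^ s * i) := by
        rw [← h]
        apply Finset.sum_congr rfl
        intro d hd
        rw [Nat.mul_div_assoc _ (Nat.dvd_of_mem_divisors hd)]
      rw [Nat.sum_div_divisors i (fun x => CC (2 * k) (2 ^ s * x))] at h'
      exact_mod_cast h') j hj.pos hj
  rw [← key, hfil j hj, Nat.sum_divisorsAntidiagonal (fun a b => ((ArithmeticFunction.moebius a : ℤ) : ℚ) * (2 * k : ℚ) ^ (2 ^ s * b))]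
  apply Finset.sum_congr rfl
  intro d hd
  rw [Nat.mul_div_assoc _ (Nat.dvd_of_mem_divisors hd)]


theorem UU_const : PowerSeries.constantCoeff UU = 0 := by simp [UU]

theorem UU_ne : UU ≠ 0 := by
  intro h
  have := UQ2
  rw [h, zero_mul] at this
  have hm := inv_m
  have h2 : (4 * PowerSeries.X : PowerSeries ℚ) = 0 := by
    calc (4 * PowerSeries.X : PowerSeries ℚ) =
        (4 * PowerSeries.X * ((1 - PowerSeries.X)⁻¹) ^ 2) * (1 - PowerSeries.X) ^ 2 := by
          linear_combination (-(4 * PowerSeries.X : PowerSeries ℚ) * ((1 - PowerSeries.X) * (1 - PowerSeries.X)⁻¹ + 1)) * hm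
      _ = 0 := by rw [← this, zero_mul]
  rcases mul_eq_zero.1 h2 with h3 | h3
  · have h5 := congrArg (PowerSeries.constantCoeff (R := ℚ)) h3
    rw [show (4 : PowerSeries ℚ) = ((4 : ℕ) : PowerSeries ℚ) by norm_cast, map_natCast, map_zero] at h5
    norm_num at h5
  · exact PowerSeries.X_ne_zero h3

theorem const_aeval (g : Polynomial ℚ) : PowerSeries.constantCoeff (Polynomial.aeval UU g) = g.coeff 0 := by
  conv_lhs => rw [← Polynomial.divX_mul_X_add g]
  rw [map_add, map_mul, Polynomial.aeval_X, Polynomial.aeval_C, map_add, map_mul, UU_const]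
  simp

theorem aeval_inj {p q : Polynomial ℚ} (h : Polynomial.aeval UU p = Polynomial.aeval UU q) : p = q := by
  rw [← sub_eq_zero, ← map_sub] at h
  rw [← sub_eq_zero]
  generalize p - q = r at h
  have : ∀ N : ℕ, ∀ r : Polynomial ℚ, r.natDegree ≤ N → Polynomial.aeval UU r = 0 → r = 0 := by
    intro N
    induction N with
    | zero =>
      intro r hr h
      have h0 := const_aeval r
      rw [h, map_zero] at h0
      rw [Polynomial.eq_C_of_natDegree_le_zero hr, ← h0, map_zero]
    | succ N ih =>
      intro r hr h
      have h0 := const_aeval r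
      rw [h, map_zero] at h0
      have e := Polynomial.divX_mul_X_add r
      rw [← h0, map_zero, add_zero] at e
      rw [← e, map_mul, Polynomial.aeval_X] at h
      have h1 := (mul_eq_zero.1 h).resolve_right UU_ne
      have := ih r.divX (by rw [Polynomial.natDegree_divX_eq_natDegree_tsub_one]; omega) h1
      rw [← e, this, zero_mul]
  exact this _ r le_rfl h

theorem sum_gf (i : ℕ) (s : Finset (Equiv.Perm (Fin (i + 1)))) :
    2 * PowerSeries.mk (fun k => ((∑ π ∈ s, Om (i + 1) (2 * k) π : ℕ) : ℚ)) =
      QQ ^ (i + 1 + 1) * Polynomial.aeval UU (∑ π ∈ s, Polynomial.X ^ (pk (i + 1) π + 1) : Polynomial ℚ) := by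
  have : PowerSeries.mk (fun k => ((∑ π ∈ s, Om (i + 1) (2 * k) π : ℕ) : ℚ)) =
      ∑ π ∈ s, PowerSeries.mk (fun k => (Om (i + 1) (2 * k) π : ℚ)) := by
    ext k
    rw [map_sum]
    simp
  rw [this, Finset.mul_sum, map_sum, Finset.mul_sum]
  apply Finset.sum_congr rfl
  intro π _
  rw [Om_gf, map_pow, Polynomial.aeval_X]

theorem all_gf (n : ℕ) (hn : 1 ≤ n) :
    2 * PowerSeries.mk (fun k => (2 * k : ℚ) ^ n) = QQ ^ (n + 1) * Polynomial.aeval UU (peakP n) := by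
  obtain ⟨i, rfl⟩ : ∃ i, n = i + 1 := ⟨n - 1, by omega⟩
  rw [peakP, ← sum_gf]
  simp only [Om_sum]
  push_cast
  rfl

theorem cyc_gf (n : ℕ) (hn : 1 ≤ n) :
    2 * PowerSeries.mk (fun k => (CC (2 * k) n : ℚ)) = QQ ^ (n + 1) *
      Polynomial.aeval UU ((n : Polynomial ℚ) * ∑ π ∈ cyclicSet n, Polynomial.X ^ (pk n π + 1)) := by
  obtain ⟨i, rfl⟩ : ∃ i, n = i + 1 := ⟨n - 1, by omega⟩
  rw [map_mul, map_natCast, mul_left_comm, ← sum_gf]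
  simp only [← CC_eq, sum_conj]
  rw [mul_left_comm]
  congr 1
  ext k
  rw [← map_natCast (PowerSeries.C (R := ℚ)), PowerSeries.coeff_C_mul, PowerSeries.coeff_mk, PowerSeries.coeff_mk]
  push_cast
  rfl

theorem stmt5 (n : ℕ) (hn : 1 ≤ n) :
    (n : Polynomial ℚ) * ∑ π ∈ cyclicSet n, Polynomial.X ^ (pk n π + 1)
      = ∑ d ∈ n.divisors.filter (fun d => Odd d),
          ((ArithmeticFunction.moebius d : ℤ) : Polynomial ℚ)
            * (1 - Polynomial.X) ^ ((n - n / d) / 2) * peakP (n / d) := by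
  have : NeZero n := ⟨by omega⟩
  apply aeval_inj
  have hQ : QQ ^ (n + 1) ≠ 0 := pow_ne_zero _ (fun h => by
    have := QQ_sq
    rw [h] at this
    simp at this)
  apply mul_left_cancel₀ hQ
  rw [← cyc_gf n hn, map_sum, Finset.mul_sum]
  have h1 : PowerSeries.mk (fun k => (CC (2 * k) n : ℚ)) = ∑ d ∈ n.divisors.filter (fun d => Odd d),
      ((ArithmeticFunction.moebius d : ℤ) : PowerSeries ℚ) * PowerSeries.mk (fun k => (2 * k : ℚ) ^ (n / d)) := by
    ext k
    rw [PowerSeries.coeff_mk, E4 k n hn, map_sum]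
    apply Finset.sum_congr rfl
    intro d _
    rw [← map_intCast (PowerSeries.C (R := ℚ)), PowerSeries.coeff_C_mul, PowerSeries.coeff_mk]
  rw [h1, Finset.mul_sum]
  apply Finset.sum_congr rfl
  intro d hd
  obtain ⟨hd, hod⟩ := Finset.mem_filter.1 hd
  have hd := Nat.dvd_of_mem_divisors hd
  have hle : n / d ≤ n := Nat.div_le_self _ _
  have hm : 1 ≤ n / d := Nat.div_pos (Nat.le_of_dvd hn hd) hod.pos
  obtain ⟨e, he⟩ : ∃ e, n = n / d + 2 * e := by
    obtain ⟨c, hc⟩ := hod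
    refine ⟨n / d * c, ?_⟩
    have : n / d * d = n := Nat.div_mul_cancel hd
    have h5 : n / d * d = n / d * (2 * c + 1) := congrArg (fun x => n / d * x) hc
    generalize n / d = q at *
    linarith
  have he2 : (n - n / d) / 2 = e := by omega
  rw [he2, mul_left_comm, all_gf _ hm, map_mul, map_mul, map_pow, map_sub, map_one, map_intCast, Polynomial.aeval_X]
  have h3 : QQ ^ (n + 1) = QQ ^ (n / d + 1) * (QQ ^ 2) ^ e := by
    rw [← pow_mul, ← pow_add]; congr 1; omega
  rw [h3]
  have h4 : (QQ ^ 2) ^ e * (1 - UU) ^ e = 1 := by rw [← mul_pow, QQ_sq, one_pow]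
  linear_combination (-(((ArithmeticFunction.moebius d : ℤ) : PowerSeries ℚ) * QQ ^ (n / d + 1) * Polynomial.aeval UU (peakP (n / d)))) * h4

end
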